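/- There exist no positive integers a, b with a ≤ b such that the quadratic form f^{a,b}_5(x,y,z,w) = a·x² + b·y² + 5·(z² + z·w + w²) represents every nonnegative integer; that is, for all positive integers a ≤ b there is some nonnegative integer n which cannot be written as a·x² + b·y² + 5·(z² + z·w + w²) with x, y, z, w ∈ ℤ. -/

import Mathlib

/-!
If `0 ≤ q`, then a number `n < p` of the form `a x² + b y² + p q` is already of the form
`a x² + b y²`. For `p > 3` this applies to `1`, `2` and `3`, which together force `{a, b} = {1, 2}`.
If moreover `-2` is not a square modulo `p`, then `x² + 2 y²` is anisotropic modulo `p`, so it is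
divisible by `p²` as soon as it is divisible by `p`; hence `2 p = x² + 2 y² + p q` only for `q = 2`.
The values of `z² + z w + w²` are nonnegative and, being squares modulo `3`, different from `2`.
-/

section BinaryForms

variable {a b : ℕ}

lemma eq_one_or_eq_one_of_mul_sq_add_mul_sq_eq_one {x y : ℕ} (h : a * x ^ 2 + b * y ^ 2 = 1) :
    a = 1 ∨ b = 1 := by
  rcases Nat.add_eq_one_iff.mp h with ⟨-, hy⟩ | ⟨hx, -⟩
  · exact .inr (Nat.eq_one_of_mul_eq_one_right hy)
  · exact .inl (Nat.eq_one_of_mul_eq_one_right hx)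

lemma eq_two_of_sq_add_mul_sq_eq_two_of_eq_three {x y u v : ℕ} (h₂ : x ^ 2 + b * y ^ 2 = 2)
    (h₃ : u ^ 2 + b * v ^ 2 = 3) : b = 2 := by
  have hx : x < 2 := by nlinarith
  have hy : y ≠ 0 := by
    rintro rfl
    interval_cases x <;> omega
  have hb : b ≤ 2 := calc
    b ≤ b * y ^ 2 := Nat.le_mul_of_pos_right b (by positivity)
    _ ≤ 2 := by omega
  interval_cases b
  · interval_cases x <;> omega
  · have hu : u < 2 := by nlinarith
    have hv : v < 2 := by nlinarith
    interval_cases u <;> interval_cases v <;> omega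
  · rfl

lemma coeff_eq_one_two_of_represents_le_three
    (h : ∀ n ≤ 3, ∃ x y : ℕ, a * x ^ 2 + b * y ^ 2 = n) : a = 1 ∧ b = 2 ∨ a = 2 ∧ b = 1 := by
  obtain ⟨_, _, h₁⟩ := h 1 (by norm_num)
  obtain ⟨_, _, h₂⟩ := h 2 (by norm_num)
  obtain ⟨_, _, h₃⟩ := h 3 le_rfl
  rcases eq_one_or_eq_one_of_mul_sq_add_mul_sq_eq_one h₁ with rfl | rfl
  · rw [one_mul] at h₂ h₃
    exact .inl ⟨rfl, eq_two_of_sq_add_mul_sq_eq_two_of_eq_three h₂ h₃⟩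
  · rw [one_mul, add_comm] at h₂ h₃
    exact .inr ⟨eq_two_of_sq_add_mul_sq_eq_two_of_eq_three h₂ h₃, rfl⟩

lemma mul_natAbs_sq_add_mul_natAbs_sq_eq_of_lt {m n : ℕ} {x y q : ℤ} (hn : n < m) (hq : 0 ≤ q)
    (h : (n : ℤ) = a * x ^ 2 + b * y ^ 2 + m * q) :
    a * x.natAbs ^ 2 + b * y.natAbs ^ 2 = n := by
  have hmq : (m : ℤ) * q < m * 1 := calc
    (m : ℤ) * q ≤ n := by rw [h]; exact le_add_of_nonneg_left (by positivity)
    _ < m * 1 := by omega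
  obtain rfl : q = 0 := by
    have : q < 1 := lt_of_mul_lt_mul_left hmq m.cast_nonneg
    omega
  zify
  simpa only [sq_abs, mul_zero, add_zero] using h.symm

end BinaryForms

section Anisotropic

variable {p : ℕ} [Fact p.Prime]

lemma prime_sq_dvd_sq_sub_mul_sq {d x y : ℤ} (hd : legendreSym p d = -1)
    (h : (p : ℤ) ∣ x ^ 2 - d * y ^ 2) : (p : ℤ) ^ 2 ∣ x ^ 2 - d * y ^ 2 := by
  obtain ⟨hx, hy⟩ := legendreSym.prime_dvd_of_eq_neg_one hd h
  exact dvd_sub (pow_dvd_pow_of_dvd hx 2) ((pow_dvd_pow_of_dvd hy 2).mul_left d)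

lemma eq_of_mul_prime_eq_sq_add_mul_sq_add {d m : ℕ} {x y q : ℤ} (hd : legendreSym p (-d) = -1)
    (hm : m < p) (hq : 0 ≤ q) (h : (m * p : ℤ) = x ^ 2 + d * y ^ 2 + p * q) : q = m := by
  have hp : (0 : ℤ) < p := by omega
  have hxy : x ^ 2 - -(d : ℤ) * y ^ 2 = p * (m - q) := by linear_combination -h
  have hdvd : (p : ℤ) ∣ m - q := by
    have hsq := prime_sq_dvd_sq_sub_mul_sq hd (Dvd.intro _ hxy.symm)
    rw [hxy, sq] at hsq
    exact Int.dvd_of_mul_dvd_mul_left hp.ne' hsq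
  have hnonneg : (0 : ℤ) ≤ m - q := by
    refine nonneg_of_mul_nonneg_right ?_ hp
    rw [← hxy, neg_mul, sub_neg_eq_add]
    positivity
  have := Int.eq_zero_of_dvd_of_nonneg_of_lt hnonneg (by omega) hdvd
  omega

lemma three_lt_of_legendreSym_neg_two (hp : legendreSym p (-2) = -1) : 3 < p := by
  have := (Fact.out : p.Prime).two_le
  by_contra! hle
  interval_cases p <;> norm_num at hp

end Anisotropic

lemma sq_add_mul_add_sq_nonneg {R : Type*} [CommRing R] [LinearOrder R] [IsStrictOrderedRing R]
    (z w : R) : 0 ≤ z ^ 2 + z * w + w ^ 2 := by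
  nlinarith [sq_nonneg (z + w), sq_nonneg z, sq_nonneg w]

lemma not_sq_add_mul_add_sq_modEq_two (z w : ℤ) : ¬ z ^ 2 + z * w + w ^ 2 ≡ 2 [ZMOD 3] := by
  have hsq : z ^ 2 + z * w + w ^ 2 ≡ (z - w) ^ 2 [ZMOD 3] :=
    Int.modEq_iff_dvd.mpr ⟨-(z * w), by ring⟩
  have two_not_sq : ∀ t : ZMod 3, t ^ 2 ≠ 2 := by decide
  intro h
  apply two_not_sq (z - w : ℤ)
  exact_mod_cast (ZMod.intCast_eq_intCast_iff _ _ 3).mpr (hsq.symm.trans h)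

lemma sq_add_mul_add_sq_ne_two (z w : ℤ) : z ^ 2 + z * w + w ^ 2 ≠ 2 :=
  fun h ↦ not_sq_add_mul_add_sq_modEq_two z w (h ▸ Int.ModEq.refl _)

theorem stmt_18_general {p : ℕ} [Fact p.Prime] (hp : legendreSym p (-2) = -1) (a b : ℕ) :
    ∃ n : ℕ, ∀ x y q : ℤ, 0 ≤ q → q ≠ 2 → (n : ℤ) ≠ a * x ^ 2 + b * y ^ 2 + p * q := by
  by_contra! h
  have hp3 : 3 < p := three_lt_of_legendreSym_neg_two hp
  have hab : a = 1 ∧ b = 2 ∨ a = 2 ∧ b = 1 := by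
    refine coeff_eq_one_two_of_represents_le_three fun n hn ↦ ?_
    obtain ⟨x, y, q, hq, -, hxy⟩ := h n
    exact ⟨_, _, mul_natAbs_sq_add_mul_natAbs_sq_eq_of_lt (by omega) hq hxy⟩
  obtain ⟨x, y, q, hq, hq2, hxy⟩ := h (2 * p)
  apply hq2
  rcases hab with ⟨rfl, rfl⟩ | ⟨rfl, rfl⟩
  · exact eq_of_mul_prime_eq_sq_add_mul_sq_add (d := 2) (m := 2) (x := x) (y := y) hp (by omega) hq
      (by push_cast at hxy ⊢; linear_combination hxy)
  · exact eq_of_mul_prime_eq_sq_add_mul_sq_add (d := 2) (m := 2) (x := y) (y := x) hp (by omega) hq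
      (by push_cast at hxy ⊢; linear_combination hxy)

theorem stmt_18 (a b : ℕ) (ha : 0 < a) (hb : 0 < b) (hab : a ≤ b) :
    ∃ n : ℕ, ¬ ∃ x y z w : ℤ,
      (n : ℤ) = a * x ^ 2 + b * y ^ 2 + 5 * (z ^ 2 + z * w + w ^ 2) := by
  have : Fact (Nat.Prime 5) := ⟨Nat.prime_five⟩
  obtain ⟨n, hn⟩ := stmt_18_general (p := 5) (by norm_num) a b
  exact ⟨n, fun ⟨x, y, z, w, h⟩ ↦
    hn x y _ (sq_add_mul_add_sq_nonneg z w) (sq_add_mul_add_sq_ne_two z w) h⟩
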